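/- arXiv:2410.04879 — 5 statements merged into one kernel-verified Lean document; each statement's English description precedes it below -/
import Mathlib

section
/- Let F : I → ℝ be defined by F(x) = ∫_p^x e^{α(r)} dr. Then F is strictly increasing and continuous, and F is a bijection from I onto ℝ if and only if the function r ↦ e^{α(r)} is not Lebesgue-integrable on (a,p) and not Lebesgue-integrable on (p,b) (i.e. both integrals ∫_a^p e^{α(r)} dr and ∫_p^b e^{α(r)} dr are infinite). -/
open MeasureTheory Set

/-!
The primitive `F x = ∫_p^x g` of a positive density `g` is continuous and strictly increasing, so it
maps an interval `S` onto `ℝ` exactly when it is unbounded on both sides. Exhausting an interval by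
its compact subintervals shows that `g` is integrable on it iff the integrals over these are
bounded. On `S ∩ [p, ∞)` this says that `F` is bounded above on `S`, and on `S ∩ (-∞, p]` that `F`
is bounded below on `S`.
-/

open Filter Topology

theorem surjOn_univ_iff_not_bddBelow_and_not_bddAbove {X β : Type*} [TopologicalSpace X]
    [LinearOrder β] [TopologicalSpace β] [OrderClosedTopology β] [Nonempty β] [NoMinOrder β]
    [NoMaxOrder β] {f : X → β} {s : Set X} (hs : IsPreconnected s) (hf : ContinuousOn f s) :
    SurjOn f s univ ↔ ¬BddBelow (f '' s) ∧ ¬BddAbove (f '' s) := by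
  rw [SurjOn, univ_subset_iff]
  constructor
  · intro h
    rw [h]
    exact ⟨not_bddBelow_univ, not_bddAbove_univ⟩
  · rintro ⟨hbelow, habove⟩
    exact (hs.image f hf).eq_univ_of_unbounded hbelow habove

section StrictMono

variable {α β : Type*} [Preorder α] [Preorder β] {f : α → β} {a b : β} {p : α}

theorem setOf_lt_and_lt_inter_Iio_of_strictMono (hf : StrictMono f) (hp : f p < b) :
    {x | a < f x ∧ f x < b} ∩ Iio p = {x | a < f x ∧ x < p} := by
  ext x
  exact ⟨fun h => ⟨h.1.1, h.2⟩, fun h => ⟨⟨h.1, (hf h.2).trans hp⟩, h.2⟩⟩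

theorem setOf_lt_and_lt_inter_Ioi_of_strictMono (hf : StrictMono f) (hp : a < f p) :
    {x | a < f x ∧ f x < b} ∩ Ioi p = {x | p < x ∧ f x < b} := by
  ext x
  exact ⟨fun h => ⟨h.2, h.1.2⟩, fun h => ⟨⟨hp.trans (hf h.1), h.2⟩, h.1⟩⟩

end StrictMono

section OrderNeighborhoods

variable {β : Type*} [LinearOrder β] [TopologicalSpace β] [OrderClosedTopology β]

theorem exists_mem_Iic_mem_nhdsWithin {s : Set β} {x : β} (hx : x ∈ s) :
    ∃ u ∈ s, Iic u ∈ 𝓝[s] x := by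
  by_cases h : ∃ u ∈ s, x < u
  · obtain ⟨u, hu, hxu⟩ := h
    exact ⟨u, hu, mem_nhdsWithin_of_mem_nhds (Iic_mem_nhds hxu)⟩
  · push Not at h
    exact ⟨x, hx, mem_of_superset self_mem_nhdsWithin h⟩

theorem exists_Icc_mem_nhdsWithin {s : Set β} {x : β} (hx : x ∈ s) :
    ∃ l ∈ s, ∃ u ∈ s, Icc l u ∈ 𝓝[s] x := by
  obtain ⟨u, hu, hIic⟩ := exists_mem_Iic_mem_nhdsWithin hx
  obtain ⟨l, hl, hIci⟩ := exists_mem_Iic_mem_nhdsWithin (β := βᵒᵈ) hx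
  exact ⟨l, hl, u, hu, inter_mem hIci hIic⟩

end OrderNeighborhoods

section Primitive

variable {E : Type*} [NormedAddCommGroup E] {S : Set ℝ} {μ : Measure ℝ} {p x y : ℝ}

theorem intervalIntegrable_of_locallyIntegrableOn {f : ℝ → E} (hS : S.OrdConnected)
    (hf : LocallyIntegrableOn f S μ) (hx : x ∈ S) (hy : y ∈ S) : IntervalIntegrable f μ x y :=
  (hf.integrableOn_compact_subset (hS.uIcc_subset hx hy) isCompact_uIcc).intervalIntegrable

theorem continuousOn_primitive_of_locallyIntegrableOn [NormedSpace ℝ E] [NullSingletonClass μ]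
    {f : ℝ → E} (hS : S.OrdConnected) (hf : LocallyIntegrableOn f S μ) (hp : p ∈ S) :
    ContinuousOn (fun x => ∫ r in p..x, f r ∂μ) S := by
  intro x hx
  obtain ⟨l, hl, u, hu, hIcc⟩ := exists_Icc_mem_nhdsWithin hx
  have hmin : min p l ∈ S := min_rec' (· ∈ S) hp hl
  have hmax : max p u ∈ S := max_rec' (· ∈ S) hp hu
  exact (intervalIntegral.continuousWithinAt_primitive (measure_singleton x)
    (intervalIntegrable_of_locallyIntegrableOn hS hf hmin hmax)).mono_of_mem_nhdsWithin hIcc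

theorem integral_sub_integral_of_locallyIntegrableOn [NormedSpace ℝ E] {f : ℝ → E}
    (hS : S.OrdConnected) (hf : LocallyIntegrableOn f S μ) (hp : p ∈ S) (hx : x ∈ S) (hy : y ∈ S) :
    (∫ r in p..y, f r ∂μ) - ∫ r in p..x, f r ∂μ = ∫ r in x..y, f r ∂μ :=
  intervalIntegral.integral_interval_sub_left
    (intervalIntegrable_of_locallyIntegrableOn hS hf hp hy)
    (intervalIntegrable_of_locallyIntegrableOn hS hf hp hx)

theorem monotoneOn_primitive_of_nonneg {g : ℝ → ℝ} (hS : S.OrdConnected)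
    (hg : LocallyIntegrableOn g S μ) (hp : p ∈ S) (hnonneg : ∀ x ∈ S, 0 ≤ g x) :
    MonotoneOn (fun x => ∫ r in p..x, g r ∂μ) S := by
  intro x hx y hy hxy
  have hxy_nonneg : 0 ≤ ∫ r in x..y, g r ∂μ :=
    intervalIntegral.integral_nonneg hxy fun z hz => hnonneg z (hS.out hx hy hz)
  rwa [← integral_sub_integral_of_locallyIntegrableOn hS hg hp hx hy, sub_nonneg] at hxy_nonneg

theorem strictMonoOn_primitive_of_pos {g : ℝ → ℝ} (hS : S.OrdConnected)
    (hg : LocallyIntegrableOn g S) (hp : p ∈ S) (hpos : ∀ x ∈ S, 0 < g x) :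
    StrictMonoOn (fun x => ∫ r in p..x, g r) S := by
  intro x hx y hy hxy
  have hxy_pos : 0 < ∫ r in x..y, g r :=
    intervalIntegral.intervalIntegral_pos_of_pos_on
      (intervalIntegrable_of_locallyIntegrableOn hS hg hx hy)
      (fun z hz => hpos z (hS.out hx hy (Ioo_subset_Icc_self hz))) hxy
  rwa [← integral_sub_integral_of_locallyIntegrableOn hS hg hp hx hy, sub_pos] at hxy_pos

end Primitive

theorem aecover_Icc_subtype {X : Type*} [LinearOrder X] [TopologicalSpace X]
    [OrderClosedTopology X] [MeasurableSpace X] [OpensMeasurableSpace X] {μ : Measure X}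
    {T : Set X} (hT : MeasurableSet T) :
    AECover (μ.restrict T) (atBot ×ˢ atTop : Filter (T × T)) fun i => Icc (i.1 : X) i.2 where
  ae_eventually_mem := by
    filter_upwards [ae_restrict_mem hT] with x hx
    exact (eventually_le_atBot (⟨x, hx⟩ : T)).prod_mk (eventually_ge_atTop (⟨x, hx⟩ : T))
  measurableSet _ := measurableSet_Icc

section Integrability

variable {g : ℝ → ℝ} {S : Set ℝ} {μ : Measure ℝ} [NullSingletonClass μ] {p : ℝ}

theorem integrableOn_iff_exists_forall_intervalIntegral_le (hS : S.OrdConnected)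
    (hg : LocallyIntegrableOn g S μ) (hnonneg : ∀ x ∈ S, 0 ≤ g x) :
    IntegrableOn g S μ ↔ ∃ C, ∀ x ∈ S, ∀ y ∈ S, x ≤ y → ∫ r in x..y, g r ∂μ ≤ C := by
  have hnonneg_ae : 0 ≤ᵐ[μ.restrict S] g :=
    (ae_restrict_mem hS.measurableSet).mono hnonneg
  constructor
  · intro hint
    refine ⟨∫ r in S, g r ∂μ, fun x hx y hy hxy => ?_⟩
    rw [intervalIntegral.integral_of_le hxy]
    exact setIntegral_mono_set hint hnonneg_ae
      (Ioc_subset_Icc_self.trans (hS.out hx hy)).eventuallyLE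
  · rintro ⟨C, hC⟩
    obtain rfl | ⟨t, ht⟩ := S.eq_empty_or_nonempty
    · exact integrableOn_empty
    have : Nonempty S := ⟨⟨t, ht⟩⟩
    have restrict_Icc (i : S × S) : (μ.restrict S).restrict (Icc i.1 i.2) =
        μ.restrict (Icc i.1 i.2) :=
      Measure.restrict_restrict_of_subset (hS.out i.1.2 i.2.2)
    refine (aecover_Icc_subtype hS.measurableSet).integrable_of_integral_bounded_of_nonneg_ae C
      (fun i => ?_) hnonneg_ae ?_
    · rw [IntegrableOn, restrict_Icc]
      exact hg.integrableOn_compact_subset (hS.out i.1.2 i.2.2) isCompact_Icc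
    · filter_upwards [(eventually_le_atBot (⟨t, ht⟩ : S)).prod_mk
        (eventually_ge_atTop (⟨t, ht⟩ : S))] with i hi
      have hle : (i.1 : ℝ) ≤ i.2 := hi.1.trans hi.2
      rw [restrict_Icc, integral_Icc_eq_integral_Ioc, ← intervalIntegral.integral_of_le hle]
      exact hC _ i.1.2 _ i.2.2 hle

theorem bddAbove_primitive_image_iff (hS : S.OrdConnected) (hg : LocallyIntegrableOn g S μ)
    (hp : p ∈ S) (hnonneg : ∀ x ∈ S, 0 ≤ g x) :
    BddAbove ((fun x => ∫ r in p..x, g r ∂μ) '' S) ↔ IntegrableOn g (S ∩ Ioi p) μ := by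
  rw [integrableOn_congr_set_ae ((ae_eq_refl S).inter Ioi_ae_eq_Ici),
    integrableOn_iff_exists_forall_intervalIntegral_le (hS.inter ordConnected_Ici)
      (hg.mono_set inter_subset_left) fun x hx => hnonneg x hx.1, bddAbove_def]
  simp only [forall_mem_image]
  have hmono := monotoneOn_primitive_of_nonneg hS hg hp hnonneg
  constructor
  · rintro ⟨C, hC⟩
    refine ⟨C, fun x hx y hy _ => ?_⟩
    rw [← integral_sub_integral_of_locallyIntegrableOn hS hg hp hx.1 hy.1]
    have hpx : ∫ r in p..p, g r ∂μ ≤ ∫ r in p..x, g r ∂μ := hmono hp hx.1 hx.2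
    rw [intervalIntegral.integral_same] at hpx
    linarith [hC hy.1]
  · rintro ⟨C, hC⟩
    refine ⟨C, fun x hx => ?_⟩
    have hmax : max p x ∈ S := max_rec' (· ∈ S) hp hx
    exact (hmono hx hmax (le_max_right p x)).trans
      (hC p ⟨hp, self_mem_Ici⟩ _ ⟨hmax, le_max_left p x⟩ (le_max_left p x))

theorem bddBelow_primitive_image_iff (hS : S.OrdConnected) (hg : LocallyIntegrableOn g S μ)
    (hp : p ∈ S) (hnonneg : ∀ x ∈ S, 0 ≤ g x) :
    BddBelow ((fun x => ∫ r in p..x, g r ∂μ) '' S) ↔ IntegrableOn g (S ∩ Iio p) μ := by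
  rw [integrableOn_congr_set_ae ((ae_eq_refl S).inter Iio_ae_eq_Iic),
    integrableOn_iff_exists_forall_intervalIntegral_le (hS.inter ordConnected_Iic)
      (hg.mono_set inter_subset_left) fun x hx => hnonneg x hx.1, bddBelow_def]
  simp only [forall_mem_image]
  have hmono := monotoneOn_primitive_of_nonneg hS hg hp hnonneg
  constructor
  · rintro ⟨C, hC⟩
    refine ⟨-C, fun x hx y hy _ => ?_⟩
    rw [← integral_sub_integral_of_locallyIntegrableOn hS hg hp hx.1 hy.1]
    have hyp : ∫ r in p..y, g r ∂μ ≤ ∫ r in p..p, g r ∂μ := hmono hy.1 hp hy.2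
    rw [intervalIntegral.integral_same] at hyp
    linarith [hC hx.1]
  · rintro ⟨C, hC⟩
    refine ⟨-C, fun x hx => ?_⟩
    have hmin : min p x ∈ S := min_rec' (· ∈ S) hp hx
    calc -C ≤ -∫ r in min p x..p, g r ∂μ :=
          neg_le_neg (hC _ ⟨hmin, min_le_left p x⟩ p ⟨hp, self_mem_Iic⟩ (min_le_left p x))
      _ = ∫ r in p..min p x, g r ∂μ := (intervalIntegral.integral_symm _ _).symm
      _ ≤ ∫ r in p..x, g r ∂μ := hmono hmin hx (min_le_right p x)

end Integrability

theorem stmt_0_general {g : ℝ → ℝ} {S : Set ℝ} {p : ℝ} (hS : S.OrdConnected)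
    (hg : LocallyIntegrableOn g S) (hp : p ∈ S) (hpos : ∀ x ∈ S, 0 < g x) :
    StrictMonoOn (fun x => ∫ r in p..x, g r) S ∧
    ContinuousOn (fun x => ∫ r in p..x, g r) S ∧
    (BijOn (fun x => ∫ r in p..x, g r) S univ ↔
      ¬IntegrableOn g (S ∩ Iio p) ∧ ¬IntegrableOn g (S ∩ Ioi p)) := by
  have hnonneg : ∀ x ∈ S, 0 ≤ g x := fun x hx => (hpos x hx).le
  have hmono := strictMonoOn_primitive_of_pos hS hg hp hpos
  have hcont := continuousOn_primitive_of_locallyIntegrableOn hS hg hp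
  refine ⟨hmono, hcont, ?_⟩
  rw [← bddBelow_primitive_image_iff hS hg hp hnonneg,
    ← bddAbove_primitive_image_iff hS hg hp hnonneg,
    ← surjOn_univ_iff_not_bddBelow_and_not_bddAbove hS.isPreconnected hcont]
  exact ⟨BijOn.surjOn, fun hsurj => ⟨mapsTo_univ _ _, hmono.injOn, hsurj⟩⟩

/-- Let `a, b ∈ ℝ ∪ {−∞, +∞}` with `a < b`, `I = (a,b)`, `α : I → ℝ` continuous, `p ∈ I`,
and `F x = ∫_p^x e^{α r} dr`.  Then `F` is strictly increasing and continuous on `I`, and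
`F` is a bijection from `I` onto `ℝ` iff `r ↦ e^{α r}` is not Lebesgue-integrable on `(a,p)`
and not Lebesgue-integrable on `(p,b)`. -/
theorem stmt_0 (a b : EReal) (hab : a < b) (α : ℝ → ℝ) (p : ℝ)
    (hp : a < (p : EReal) ∧ (p : EReal) < b)
    (hα : ContinuousOn α {x : ℝ | a < (x : EReal) ∧ (x : EReal) < b}) :
    StrictMonoOn (fun x => ∫ r in p..x, Real.exp (α r))
      {x : ℝ | a < (x : EReal) ∧ (x : EReal) < b} ∧
    ContinuousOn (fun x => ∫ r in p..x, Real.exp (α r))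
      {x : ℝ | a < (x : EReal) ∧ (x : EReal) < b} ∧
    (Set.BijOn (fun x => ∫ r in p..x, Real.exp (α r))
        {x : ℝ | a < (x : EReal) ∧ (x : EReal) < b} Set.univ ↔
      (¬ IntegrableOn (fun r => Real.exp (α r)) {x : ℝ | a < (x : EReal) ∧ x < p} ∧
       ¬ IntegrableOn (fun r => Real.exp (α r)) {x : ℝ | p < x ∧ (x : EReal) < b})) := by
  have hS : {x : ℝ | a < (x : EReal) ∧ (x : EReal) < b}.OrdConnected :=
    ordConnected_Ioo.preimage_mono EReal.coe_strictMono.monotone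
  rw [← setOf_lt_and_lt_inter_Iio_of_strictMono EReal.coe_strictMono hp.2,
    ← setOf_lt_and_lt_inter_Ioi_of_strictMono EReal.coe_strictMono hp.1]
  exact stmt_0_general hS (hα.rexp.locallyIntegrableOn hS.measurableSet) hp
    fun x _ => Real.exp_pos (α x)
end

section
/- Define d : I × I → ℝ by d(x,y) = ∫_{[min(x,y), max(x,y)]} e^{α(r)} dr. Then d is a metric on I, and the metric space (I, d) is complete if and only if the function r ↦ e^{α(r)} is not Lebesgue-integrable on (a,p) and not Lebesgue-integrable on (p,b). -/
open MeasureTheory Set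

/-!
The signed arclength `x ↦ ∫ r in p..x, f r`, with `f = exp ∘ α`, is an isometry of `(I, d)` onto an
open interval `S` of the real line. So `(I, d)` is complete iff `S` is closed, which for a nonempty
open interval means that `S` is unbounded on both sides. As `f` is nonnegative, its integrability on
each of the two halves of `I` is the boundedness of `S` on the corresponding side.
-/

section OrderTopology

variable {α β : Type*} [ConditionallyCompleteLinearOrder α] [TopologicalSpace α] [OrderTopology α]
  [DenselyOrdered α] [NoMinOrder α] [NoMaxOrder α]

theorem isOpen_image_of_strictMonoOn [LinearOrder β] [TopologicalSpace β] [OrderTopology β]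
    {F : α → β} {U : Set α} (hU : IsOpen U) (hmono : StrictMonoOn F U) (hcont : ContinuousOn F U) :
    IsOpen (F '' U) := by
  refine isOpen_iff_mem_nhds.2 (forall_mem_image.2 fun x hx => ?_)
  obtain ⟨u, v, -, huv, huvU⟩ := exists_Icc_mem_subset_of_mem_nhds (hU.mem_nhds hx)
  obtain ⟨hux, hxv⟩ : u < x ∧ x < v := Icc_mem_nhds_iff.1 huv
  have hle : u ≤ v := (hux.trans hxv).le
  have hFu : F u < F x := hmono (huvU (left_mem_Icc.2 hle)) hx hux
  have hFv : F x < F v := hmono hx (huvU (right_mem_Icc.2 hle)) hxv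
  exact Filter.mem_of_superset (Icc_mem_nhds hFu hFv)
    ((intermediate_value_Icc hle (hcont.mono huvU)).trans (image_mono huvU))

theorem isClosed_iff_not_bddBelow_and_not_bddAbove_of_isOpen {S : Set α} (hne : S.Nonempty)
    (hS : IsOpen S) (hconn : IsPreconnected S) : IsClosed S ↔ ¬BddBelow S ∧ ¬BddAbove S := by
  constructor
  · intro hclosed
    rw [IsClopen.eq_univ ⟨hclosed, hS⟩ hne]
    exact ⟨not_bddBelow_univ, not_bddAbove_univ⟩
  · rintro ⟨hbelow, habove⟩
    rw [hconn.eq_univ_of_unbounded hbelow habove]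
    exact isClosed_univ

end OrderTopology

section MonotoneOn

variable {α β : Type*} [LinearOrder α] [LinearOrder β] {F : α → β} {s : Set α} {p : α}

theorem bddAbove_image_inter_Ioi_iff (hF : MonotoneOn F s) (hp : p ∈ s) :
    BddAbove (F '' (s ∩ Ioi p)) ↔ BddAbove (F '' s) := by
  have hIic : BddAbove (F '' (s ∩ Iic p)) :=
    ⟨F p, forall_mem_image.2 fun _ hx => hF hx.1 hp hx.2⟩
  have hunion : F '' s = F '' (s ∩ Iic p) ∪ F '' (s ∩ Ioi p) := by
    rw [← image_union, ← inter_union_distrib_left, Iic_union_Ioi, inter_univ]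
  rw [hunion, bddAbove_union, and_iff_right hIic]

variable [Bornology β] [IsOrderBornology β]

theorem isBounded_image_inter_Ioi_iff (hF : MonotoneOn F s) (hp : p ∈ s) :
    Bornology.IsBounded (F '' (s ∩ Ioi p)) ↔ BddAbove (F '' s) := by
  have hbelow : BddBelow (F '' (s ∩ Ioi p)) :=
    ⟨F p, forall_mem_image.2 fun _ hx => hF hp hx.1 hx.2.le⟩
  rw [isBounded_iff_bddBelow_bddAbove, and_iff_right hbelow, bddAbove_image_inter_Ioi_iff hF hp]

theorem isBounded_image_inter_Iio_iff (hF : MonotoneOn F s) (hp : p ∈ s) :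
    Bornology.IsBounded (F '' (s ∩ Iio p)) ↔ BddBelow (F '' s) :=
  isBounded_image_inter_Ioi_iff (α := αᵒᵈ) (β := βᵒᵈ) hF.dual hp

end MonotoneOn

theorem completeSpace_induced_iff_isClosed_range {X Y : Type*} [MetricSpace Y] [CompleteSpace Y]
    {F : X → Y} (hF : F.Injective) :
    @CompleteSpace X (MetricSpace.induced F hF inferInstance).toUniformSpace ↔
      IsClosed (range F) := by
  let _ : MetricSpace X := MetricSpace.induced F hF inferInstance
  have hisom : Isometry F := Isometry.of_dist_eq fun _ _ => rfl
  rw [completeSpace_iff_isComplete_range hisom.isUniformInducing]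
  exact ⟨IsComplete.isClosed, IsClosed.isComplete⟩

theorem integrableOn_iff_exists_setIntegral_isCompact_le {X : Type*} [TopologicalSpace X]
    [LocallyCompactSpace X] [SecondCountableTopology X] [T2Space X] [MeasurableSpace X]
    [OpensMeasurableSpace X] {μ : Measure X} {U : Set X} {f : X → ℝ} (hU : IsOpen U)
    (hf : LocallyIntegrableOn f U μ) (hf₀ : ∀ x ∈ U, 0 ≤ f x) :
    IntegrableOn f U μ ↔ ∃ C, ∀ K ⊆ U, IsCompact K → ∫ x in K, f x ∂μ ≤ C := by
  have hae : 0 ≤ᵐ[μ.restrict U] f := ae_restrict_of_forall_mem hU.measurableSet hf₀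
  constructor
  · exact fun h => ⟨∫ x in U, f x ∂μ, fun K hK _ => setIntegral_mono_set h hae hK.eventuallyLE⟩
  · rintro ⟨C, hC⟩
    have : LocallyCompactSpace U := hU.locallyCompactSpace
    let E : CompactExhaustion U := default
    let φ : ℕ → Set X := fun n => Subtype.val '' E n
    have hφU (n : ℕ) : φ n ⊆ U := Subtype.coe_image_subset U (E n)
    have hφc (n : ℕ) : IsCompact (φ n) := (E.isCompact n).image continuous_subtype_val
    have hφ (n : ℕ) : (μ.restrict U).restrict (φ n) = μ.restrict (φ n) :=
      Measure.restrict_restrict_of_subset (hφU n)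
    have hcover : AECover (μ.restrict U) Filter.atTop φ := by
      refine ⟨ae_restrict_of_forall_mem hU.measurableSet fun x hx => ?_,
        fun n => (hφc n).measurableSet⟩
      filter_upwards [Filter.eventually_ge_atTop (E.find ⟨x, hx⟩)] with n hn
      exact mem_image_of_mem Subtype.val (E.subset hn (E.mem_find ⟨x, hx⟩))
    refine hcover.integrable_of_integral_bounded_of_nonneg_ae C (fun n => ?_) hae
      (.of_forall fun n => ?_)
    · rw [IntegrableOn, hφ]
      exact hf.integrableOn_compact_subset (hφU n) (hφc n)
    · rw [hφ]
      exact hC _ (hφU n) (hφc n)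

section ERealInterval

variable {a b : EReal} {p : ℝ}

theorem ordConnected_setOf_lt_coe_and_coe_lt :
    {x : ℝ | a < (x : EReal) ∧ (x : EReal) < b}.OrdConnected :=
  ordConnected_Ioo.preimage_mono EReal.coe_strictMono.monotone

theorem isOpen_setOf_lt_coe_and_coe_lt : IsOpen {x : ℝ | a < (x : EReal) ∧ (x : EReal) < b} :=
  isOpen_Ioo.preimage continuous_coe_real_ereal

theorem setOf_lt_coe_and_coe_lt_inter_Iio (hp : (p : EReal) < b) :
    {x : ℝ | a < (x : EReal) ∧ (x : EReal) < b} ∩ Iio p = {x : ℝ | a < (x : EReal) ∧ x < p} := by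
  ext x
  exact ⟨fun h => ⟨h.1.1, h.2⟩, fun h => ⟨⟨h.1, (EReal.coe_lt_coe h.2).trans hp⟩, h.2⟩⟩

theorem setOf_lt_coe_and_coe_lt_inter_Ioi (hp : a < (p : EReal)) :
    {x : ℝ | a < (x : EReal) ∧ (x : EReal) < b} ∩ Ioi p = {x : ℝ | p < x ∧ (x : EReal) < b} := by
  ext x
  exact ⟨fun h => ⟨h.2, h.1.2⟩, fun h => ⟨⟨hp.trans (EReal.coe_lt_coe h.1), h.2⟩, h.1⟩⟩

end ERealInterval

/-- The signed arclength from `p` to `x` for the metric `f(r)² dr²` on the line; it is negative to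
the left of `p`. -/
noncomputable def signedArclength (f : ℝ → ℝ) (p x : ℝ) : ℝ := ∫ r in p..x, f r

section SignedArclength

variable {I J : Set ℝ} {f : ℝ → ℝ} {p x y : ℝ}

theorem intervalIntegrable_of_locallyIntegrableOn_s1 (hI : I.OrdConnected)
    (hf : LocallyIntegrableOn f I) (hx : x ∈ I) (hy : y ∈ I) : IntervalIntegrable f volume x y :=
  (hf.integrableOn_compact_subset (hI.uIcc_subset hx hy) isCompact_uIcc).intervalIntegrable

theorem signedArclength_sub_signedArclength (hI : I.OrdConnected) (hf : LocallyIntegrableOn f I)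
    (hp : p ∈ I) (hx : x ∈ I) (hy : y ∈ I) :
    signedArclength f p y - signedArclength f p x = ∫ r in x..y, f r :=
  intervalIntegral.integral_interval_sub_left
    (intervalIntegrable_of_locallyIntegrableOn_s1 hI hf hp hy)
    (intervalIntegrable_of_locallyIntegrableOn_s1 hI hf hp hx)

theorem dist_signedArclength (hI : I.OrdConnected) (hf : LocallyIntegrableOn f I)
    (hf₀ : ∀ r ∈ I, 0 ≤ f r) (hp : p ∈ I) (hx : x ∈ I) (hy : y ∈ I) :
    dist (signedArclength f p x) (signedArclength f p y) = ∫ r in uIcc x y, f r := by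
  have hnonneg : 0 ≤ ∫ r in uIcc x y, f r :=
    setIntegral_nonneg measurableSet_uIcc fun r hr => hf₀ r (hI.uIcc_subset hx hy hr)
  rw [dist_comm, Real.dist_eq, signedArclength_sub_signedArclength hI hf hp hx hy,
    intervalIntegral.abs_intervalIntegral_eq, uIoc, ← integral_Icc_eq_integral_Ioc]
  exact abs_of_nonneg hnonneg

theorem strictMonoOn_signedArclength (hI : I.OrdConnected) (hf : LocallyIntegrableOn f I)
    (hf₀ : ∀ r ∈ I, 0 < f r) (hp : p ∈ I) : StrictMonoOn (signedArclength f p) I := by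
  intro x hx y hy hxy
  rw [← sub_pos, signedArclength_sub_signedArclength hI hf hp hx hy]
  exact intervalIntegral.intervalIntegral_pos_of_pos_on
    (intervalIntegrable_of_locallyIntegrableOn_s1 hI hf hx hy)
    (fun r hr => hf₀ r (hI.out hx hy (Ioo_subset_Icc_self hr))) hxy

theorem continuousOn_signedArclength (hI : I.OrdConnected) (hIo : IsOpen I)
    (hf : LocallyIntegrableOn f I) (hp : p ∈ I) : ContinuousOn (signedArclength f p) I := by
  intro x hx
  obtain ⟨u, v, -, huv, huvI⟩ := exists_Icc_mem_subset_of_mem_nhds (hIo.mem_nhds hx)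
  have hle : u ≤ v := nonempty_Icc.1 ⟨x, mem_of_mem_nhds huv⟩
  have hmin : min p u ∈ I := min_rec' (· ∈ I) hp (huvI (left_mem_Icc.2 hle))
  have hmax : max p v ∈ I := max_rec' (· ∈ I) hp (huvI (right_mem_Icc.2 hle))
  have hprim := intervalIntegrable_of_locallyIntegrableOn_s1 hI hf hmin hmax
  exact (intervalIntegral.continuousWithinAt_primitive (measure_singleton x) hprim).continuousAt huv
    |>.continuousWithinAt

theorem integrableOn_iff_isBounded_image_signedArclength (hI : I.OrdConnected)
    (hf : LocallyIntegrableOn f I) (hf₀ : ∀ r ∈ I, 0 ≤ f r) (hp : p ∈ I) (hJI : J ⊆ I)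
    (hJ : J.OrdConnected) (hJo : IsOpen J) :
    IntegrableOn f J ↔ Bornology.IsBounded (signedArclength f p '' J) := by
  have hJ₀ : ∀ r ∈ J, 0 ≤ f r := fun r hr => hf₀ r (hJI hr)
  have hdist : ∀ x ∈ J, ∀ y ∈ J,
      dist (signedArclength f p x) (signedArclength f p y) = ∫ r in uIcc x y, f r :=
    fun x hx y hy => dist_signedArclength hI hf hf₀ hp (hJI hx) (hJI hy)
  simp only [integrableOn_iff_exists_setIntegral_isCompact_le hJo (hf.mono_set hJI) hJ₀,
    Metric.isBounded_iff, forall_mem_image]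
  constructor
  · rintro ⟨C, hC⟩
    refine ⟨C, fun x hx y hy => ?_⟩
    rw [hdist x hx y hy]
    exact hC _ (hJ.uIcc_subset hx hy) isCompact_uIcc
  · rintro ⟨C, hC⟩
    refine ⟨max C 0, fun K hKJ hK => ?_⟩
    rcases K.eq_empty_or_nonempty with rfl | hne
    · simp
    have hinf : sInf K ∈ J := hKJ (hK.sInf_mem hne)
    have hsup : sSup K ∈ J := hKJ (hK.sSup_mem hne)
    have hKuIcc : K ⊆ uIcc (sInf K) (sSup K) :=
      (subset_Icc_csInf_csSup hK.bddBelow hK.bddAbove).trans Icc_subset_uIcc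
    have huIccJ : uIcc (sInf K) (sSup K) ⊆ J := hJ.uIcc_subset hinf hsup
    calc ∫ r in K, f r
        ≤ ∫ r in uIcc (sInf K) (sSup K), f r :=
          setIntegral_mono_set
            (hf.integrableOn_compact_subset (huIccJ.trans hJI) isCompact_uIcc)
            (ae_restrict_of_forall_mem measurableSet_uIcc fun r hr => hJ₀ r (huIccJ hr))
            hKuIcc.eventuallyLE
      _ = dist (signedArclength f p (sInf K)) (signedArclength f p (sSup K)) :=
          (hdist _ hinf _ hsup).symm
      _ ≤ max C 0 := (hC hinf hsup).trans (le_max_left C 0)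

theorem isClosed_image_signedArclength_iff (hI : I.OrdConnected) (hIo : IsOpen I)
    (hf : LocallyIntegrableOn f I) (hf₀ : ∀ r ∈ I, 0 < f r) (hp : p ∈ I) :
    IsClosed (signedArclength f p '' I) ↔
      ¬IntegrableOn f (I ∩ Iio p) ∧ ¬IntegrableOn f (I ∩ Ioi p) := by
  have hmono := strictMonoOn_signedArclength hI hf hf₀ hp
  have hcont := continuousOn_signedArclength hI hIo hf hp
  have hbdd {J : Set ℝ} := integrableOn_iff_isBounded_image_signedArclength (J := J) hI hf
    (fun r hr => (hf₀ r hr).le) hp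
  rw [hbdd inter_subset_left (hI.inter ordConnected_Iio) (hIo.inter isOpen_Iio),
    hbdd inter_subset_left (hI.inter ordConnected_Ioi) (hIo.inter isOpen_Ioi),
    isBounded_image_inter_Iio_iff hmono.monotoneOn hp,
    isBounded_image_inter_Ioi_iff hmono.monotoneOn hp]
  exact isClosed_iff_not_bddBelow_and_not_bddAbove_of_isOpen ⟨_, mem_image_of_mem _ hp⟩
    (isOpen_image_of_strictMonoOn hIo hmono hcont) (hI.isPreconnected.image _ hcont)

end SignedArclength

theorem stmt_1_general {I : Set ℝ} {f : ℝ → ℝ} {p : ℝ} (hI : I.OrdConnected) (hIo : IsOpen I)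
    (hf : LocallyIntegrableOn f I) (hf₀ : ∀ r ∈ I, 0 < f r) (hp : p ∈ I) :
    ∃ m : MetricSpace I,
      (∀ x y : I, m.dist x y = ∫ r in Icc (min x.1 y.1) (max x.1 y.1), f r) ∧
      (@CompleteSpace _ m.toUniformSpace ↔
        ¬IntegrableOn f (I ∩ Iio p) ∧ ¬IntegrableOn f (I ∩ Ioi p)) := by
  have hinj : (I.domRestrict (signedArclength f p)).Injective :=
    injOn_iff_injective.1 (strictMonoOn_signedArclength hI hf hf₀ hp).injOn
  refine ⟨.induced _ hinj inferInstance, fun x y => ?_, ?_⟩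
  · exact dist_signedArclength hI hf (fun r hr => (hf₀ r hr).le) hp x.2 y.2
  · rw [completeSpace_induced_iff_isClosed_range hinj, range_domRestrict,
      isClosed_image_signedArclength_iff hI hIo hf hf₀ hp]

/-- Let `a, b ∈ ℝ ∪ {−∞, +∞}` with `a < b`, `I = (a,b)`, `α : I → ℝ` continuous, `p ∈ I`.
Then `d(x,y) = ∫_{[min(x,y),max(x,y)]} e^{α r} dr` is a metric on `I` (i.e. there is a metric
space structure on `I` whose distance is `d`), and the metric space `(I,d)` is complete iff
`r ↦ e^{α r}` is not Lebesgue-integrable on `(a,p)` and not on `(p,b)`. -/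
theorem stmt_1 (a b : EReal) (hab : a < b) (α : ℝ → ℝ) (p : ℝ)
    (hp : a < (p : EReal) ∧ (p : EReal) < b)
    (hα : ContinuousOn α {x : ℝ | a < (x : EReal) ∧ (x : EReal) < b}) :
    ∃ m : MetricSpace {x : ℝ // a < (x : EReal) ∧ (x : EReal) < b},
      (∀ x y : {x : ℝ // a < (x : EReal) ∧ (x : EReal) < b},
        m.dist x y = ∫ r in Set.Icc (min x.1 y.1) (max x.1 y.1), Real.exp (α r)) ∧
      (@CompleteSpace _ m.toUniformSpace ↔
        (¬ IntegrableOn (fun r => Real.exp (α r)) {x : ℝ | a < (x : EReal) ∧ x < p} ∧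
         ¬ IntegrableOn (fun r => Real.exp (α r)) {x : ℝ | p < x ∧ (x : EReal) < b})) := by
  rw [← setOf_lt_coe_and_coe_lt_inter_Iio hp.2, ← setOf_lt_coe_and_coe_lt_inter_Ioi hp.1]
  exact stmt_1_general ordConnected_setOf_lt_coe_and_coe_lt isOpen_setOf_lt_coe_and_coe_lt
    (hα.rexp.locallyIntegrableOn isOpen_setOf_lt_coe_and_coe_lt.measurableSet)
    (fun r _ => Real.exp_pos (α r)) hp
end

section
/- There exists a twice continuously differentiable function γ : ℝ → I satisfying γ''(t) + α'(γ(t))·(γ'(t))² = 0 for all t ∈ ℝ, with γ(0) = q and γ'(0) = 1, if and only if the function r ↦ e^{α(r)} is not Lebesgue-integrable on (a,q) and not Lebesgue-integrable on (q,b). -/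
open MeasureTheory Set

/-!
In the metric `e^{2α} dr²` the arclength coordinate `s(x) = ∫_q^x e^α` straightens geodesics:
`γ'' + α'(γ) γ'² = 0` says that the speed `e^{α(γ)} γ'` is constant, i.e. that `s ∘ γ` is affine.
A nonconstant geodesic defined on all of `ℝ` thus exists if and only if `s` maps the interval onto
`ℝ`. As the image of `s` is an interval, this means that it is unbounded below and above, and since
`e^α > 0` each of the two conditions is the failure of integrability on one side of `q`.
-/

open Filter

section IntervalIntegral

variable {f : ℝ → ℝ} {I : Set ℝ} {q : ℝ}

theorem integrableOn_inter_Ioi_of_intervalIntegral_le [hI : I.OrdConnected] (hq : q ∈ I)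
    (hf : ∀ x ∈ I, IntervalIntegrable f volume q x) (hf₀ : ∀ x ∈ I, 0 ≤ f x) {M : ℝ}
    (hM : ∀ x ∈ I, ∫ r in q..x, f r ≤ M) : IntegrableOn f (I ∩ Ioi q) := by
  have hmeas : MeasurableSet (I ∩ Ioi q) := hI.measurableSet.inter measurableSet_Ioi
  have inter_eq {x : ℝ} (hx : x ∈ I) : Iic x ∩ (I ∩ Ioi q) = Ioc q x :=
    Subset.antisymm (fun r hr => ⟨hr.2.2, hr.1⟩) fun r hr =>
      ⟨hr.2, hI.out hq hx (Ioc_subset_Icc_self hr), hr.1⟩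
  have : Nonempty I := ⟨⟨q, hq⟩⟩
  have cover : AECover (volume.restrict (I ∩ Ioi q)) atTop fun x : I => Iic (x : ℝ) :=
    ⟨ae_restrict_of_forall_mem hmeas fun x hx => eventually_ge_atTop (⟨x, hx.1⟩ : I),
      fun _ => measurableSet_Iic⟩
  -- `atTop` on `I` is countably generated: an order-connected subtype has the order topology.
  refine cover.integrable_of_integral_bounded_of_nonneg_ae M (fun x => ?_)
    (ae_restrict_of_forall_mem hmeas fun x hx => hf₀ x hx.1) ?_
  · rw [IntegrableOn, Measure.restrict_restrict measurableSet_Iic, inter_eq x.2]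
    exact (hf x x.2).1
  · filter_upwards [eventually_ge_atTop (⟨q, hq⟩ : I)] with x hqx
    rw [Measure.restrict_restrict measurableSet_Iic, inter_eq x.2,
      ← intervalIntegral.integral_of_le hqx]
    exact hM x x.2

theorem intervalIntegral_le_setIntegral_inter_Ioi [hI : I.OrdConnected] (hq : q ∈ I)
    (hf : IntegrableOn f (I ∩ Ioi q)) (hf₀ : ∀ x ∈ I, 0 ≤ f x) {x : ℝ} (hx : x ∈ I) :
    ∫ r in q..x, f r ≤ ∫ r in I ∩ Ioi q, f r := by
  have hmeas : MeasurableSet (I ∩ Ioi q) := hI.measurableSet.inter measurableSet_Ioi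
  rcases le_total q x with hqx | hxq
  · rw [intervalIntegral.integral_of_le hqx]
    exact setIntegral_mono_set hf (ae_restrict_of_forall_mem hmeas fun r hr => hf₀ r hr.1)
      (LE.le.eventuallyLE fun r hr =>
        ⟨hI.out hq hx (Ioc_subset_Icc_self hr), hr.1⟩)
  · calc ∫ r in q..x, f r = -∫ r in x..q, f r := intervalIntegral.integral_symm x q
      _ ≤ 0 := neg_nonpos.2 <| intervalIntegral.integral_nonneg hxq fun r hr =>
        hf₀ r (hI.out hx hq hr)
      _ ≤ ∫ r in I ∩ Ioi q, f r := setIntegral_nonneg hmeas fun r hr => hf₀ r hr.1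

theorem integrableOn_inter_Ioi_iff_bddAbove [I.OrdConnected] (hq : q ∈ I)
    (hf : ∀ x ∈ I, IntervalIntegrable f volume q x) (hf₀ : ∀ x ∈ I, 0 ≤ f x) :
    IntegrableOn f (I ∩ Ioi q) ↔ BddAbove ((fun x => ∫ r in q..x, f r) '' I) := by
  constructor
  · intro hint
    exact ⟨_, forall_mem_image.2 fun x =>
      intervalIntegral_le_setIntegral_inter_Ioi hq hint hf₀⟩
  · rintro ⟨M, hM⟩
    exact integrableOn_inter_Ioi_of_intervalIntegral_le hq hf hf₀ (forall_mem_image.1 hM)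

theorem integrableOn_inter_Iio_iff_bddBelow [I.OrdConnected] (hq : q ∈ I)
    (hf : ∀ x ∈ I, IntervalIntegrable f volume q x) (hf₀ : ∀ x ∈ I, 0 ≤ f x) :
    IntegrableOn f (I ∩ Iio q) ↔ BddBelow ((fun x => ∫ r in q..x, f r) '' I) := by
  have : (-I).OrdConnected := OrdConnected.preimage_anti ‹_› fun _ _ => neg_le_neg
  have reflect_integrableOn : IntegrableOn f (I ∩ Iio q) ↔
      IntegrableOn (fun x => f (-x)) (-I ∩ Ioi (-q)) := by
    rw [← (Measure.measurePreserving_neg volume).integrableOn_comp_preimage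
      (Homeomorph.neg ℝ).measurableEmbedding]
    simp [Function.comp_def]
  have reflect_image : (fun x => ∫ r in -q..x, f (-r)) '' (-I) =
      -((fun x => ∫ r in q..x, f r) '' I) := by
    rw [← image_neg_eq_neg, ← image_neg_eq_neg, image_image, image_image]
    refine image_congr fun x _ => ?_
    simp only [intervalIntegral.integral_comp_neg, neg_neg]
    exact intervalIntegral.integral_symm q x
  rw [reflect_integrableOn, integrableOn_inter_Ioi_iff_bddAbove (I := -I) (by simpa using hq)
    (fun x hx => ?_) fun x hx => hf₀ _ hx, reflect_image, bddAbove_neg]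
  simpa using (IntervalIntegrable.iff_comp_neg (by simp)).1 (hf (-x) hx)

end IntervalIntegral

theorem continuous_of_rightInverse_of_strictMonoOn {X Y : Type*}
    [LinearOrder X] [TopologicalSpace X] [OrderTopology X] [DenselyOrdered X]
    [LinearOrder Y] [TopologicalSpace Y] [OrderTopology Y] {F : X → Y} {G : Y → X} {I : Set X}
    (hI : IsOpen I) (hF : StrictMonoOn F I) (hGI : ∀ y, G y ∈ I) (hFG : Function.RightInverse G F) :
    Continuous G := by
  have hG : StrictMono G := fun y z hyz =>
    (hF.lt_iff_lt (hGI y) (hGI z)).1 (by rwa [hFG y, hFG z])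
  refine continuous_iff_continuousAt.2 fun y =>
    (hG.strictMonoOn univ).continuousAt_of_image_mem_nhds univ_mem ?_
  filter_upwards [hI.mem_nhds (hGI y)] with x hx
  exact ⟨F x, mem_univ _, hF.injOn (hGI _) hx (hFG _)⟩

/-- The arclength coordinate of the metric `e^{2α(r)} dr²` based at `q`: the length of the segment
from `q` to `x`, counted negatively for `x < q`. -/
noncomputable def arclength (α : ℝ → ℝ) (q x : ℝ) : ℝ := ∫ r in q..x, Real.exp (α r)

/-- `γ` is an affinely parametrized geodesic of `(I, e^{2α(r)} dr²)` defined for all times. It is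
encoded as a curve in `ℝ` with values in `I`, and may be constant. -/
structure IsCompleteGeodesic (α : ℝ → ℝ) (I : Set ℝ) (γ : ℝ → ℝ) : Prop where
  contDiff : ContDiff ℝ 2 γ
  mem : ∀ t, γ t ∈ I
  equation : ∀ t, deriv (deriv γ) t + deriv α (γ t) * deriv γ t ^ 2 = 0

section Arclength

variable {α : ℝ → ℝ} {I : Set ℝ} {q x : ℝ}

theorem intervalIntegrable_exp_comp [hI : I.OrdConnected] (hα : ContinuousOn α I)
    (hq : q ∈ I) (hx : x ∈ I) : IntervalIntegrable (fun r => Real.exp (α r)) volume q x :=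
  (hα.rexp.mono (hI.uIcc_subset hq hx)).intervalIntegrable

theorem hasDerivAt_arclength [I.OrdConnected] (hI : IsOpen I) (hα : ContinuousOn α I)
    (hq : q ∈ I) (hx : x ∈ I) : HasDerivAt (arclength α q) (Real.exp (α x)) x :=
  intervalIntegral.integral_hasDerivAt_right (intervalIntegrable_exp_comp hα hq hx)
    (hα.rexp.stronglyMeasurableAtFilter hI x hx) (hα.rexp.continuousAt (hI.mem_nhds hx))

theorem continuousOn_arclength [I.OrdConnected] (hI : IsOpen I) (hα : ContinuousOn α I)
    (hq : q ∈ I) : ContinuousOn (arclength α q) I :=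
  HasDerivAt.continuousOn fun _ hx => hasDerivAt_arclength hI hα hq hx

theorem strictMonoOn_arclength [hIc : I.OrdConnected] (hI : IsOpen I) (hα : ContinuousOn α I)
    (hq : q ∈ I) : StrictMonoOn (arclength α q) I := by
  refine strictMonoOn_of_deriv_pos hIc.convex (continuousOn_arclength hI hα hq) fun x hx => ?_
  rw [(hasDerivAt_arclength hI hα hq (interior_subset hx)).deriv]
  exact Real.exp_pos _

theorem arclength_image_eq_univ_iff [hIc : I.OrdConnected] (hI : IsOpen I)
    (hα : ContinuousOn α I) (hq : q ∈ I) :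
    arclength α q '' I = univ ↔
      ¬ IntegrableOn (fun r => Real.exp (α r)) (I ∩ Iio q) ∧
      ¬ IntegrableOn (fun r => Real.exp (α r)) (I ∩ Ioi q) := by
  have hint := fun x hx => intervalIntegrable_exp_comp (x := x) hα hq hx
  have hpos := fun x (_ : x ∈ I) => (Real.exp_pos (α x)).le
  rw [integrableOn_inter_Iio_iff_bddBelow hq hint hpos,
    integrableOn_inter_Ioi_iff_bddAbove hq hint hpos]
  change _ ↔ ¬ BddBelow (arclength α q '' I) ∧ ¬ BddAbove (arclength α q '' I)
  constructor
  · intro h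
    rw [h]
    exact ⟨not_bddBelow_univ, not_bddAbove_univ⟩
  · rintro ⟨hbelow, habove⟩
    exact (hIc.isPreconnected.image _ (continuousOn_arclength hI hα hq)).eq_univ_of_unbounded
      hbelow habove

theorem exists_inverse_arclength [I.OrdConnected] (hI : IsOpen I) (hα : ContinuousOn α I)
    (hq : q ∈ I) (hsurj : arclength α q '' I = univ) :
    ∃ G : ℝ → ℝ, G 0 = q ∧ ∀ s, G s ∈ I ∧ HasDerivAt G (Real.exp (-α (G s))) s := by
  have hmono := strictMonoOn_arclength hI hα hq
  choose G hGI hG using eq_univ_iff_forall.1 hsurj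
  have hGcont : Continuous G := continuous_of_rightInverse_of_strictMonoOn hI hmono hGI hG
  refine ⟨G, hmono.injOn (hGI 0) hq ?_, fun s => ⟨hGI s, ?_⟩⟩
  · rw [hG, arclength, intervalIntegral.integral_same]
  · rw [Real.exp_neg]
    exact .of_local_left_inverse hGcont.continuousAt (hasDerivAt_arclength hI hα hq (hGI s))
      (Real.exp_ne_zero _) (.of_forall hG)

end Arclength

section Geodesic

variable {α γ : ℝ → ℝ} {I : Set ℝ}

namespace IsCompleteGeodesic

theorem hasDerivAt (hγ : IsCompleteGeodesic α I γ) (t : ℝ) : HasDerivAt γ (deriv γ t) t :=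
  (hγ.contDiff.differentiable two_ne_zero t).hasDerivAt

theorem contDiff_deriv (hγ : IsCompleteGeodesic α I γ) : ContDiff ℝ 1 (deriv γ) :=
  hγ.contDiff.deriv'

theorem exp_mul_deriv_eq (hγ : IsCompleteGeodesic α I γ) (hI : IsOpen I)
    (hα : DifferentiableOn ℝ α I) (s t : ℝ) :
    Real.exp (α (γ s)) * deriv γ s = Real.exp (α (γ t)) * deriv γ t := by
  have hderiv (t : ℝ) : HasDerivAt (fun t => Real.exp (α (γ t)) * deriv γ t) 0 t := by
    have hα_t := (hα.differentiableAt (hI.mem_nhds (hγ.mem t))).hasDerivAt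
    have hγ'_t := (hγ.contDiff_deriv.differentiable one_ne_zero t).hasDerivAt
    refine ((hα_t.comp t (hγ.hasDerivAt t)).exp.mul hγ'_t).congr_deriv ?_
    simp only [Function.comp_apply]
    linear_combination Real.exp (α (γ t)) * hγ.equation t
  exact is_const_of_deriv_eq_zero (fun t => (hderiv t).differentiableAt)
    (fun t => (hderiv t).deriv) s t

theorem arclength_eq (hγ : IsCompleteGeodesic α I γ) (hI : IsOpen I)
    (hα : DifferentiableOn ℝ α I) (t : ℝ) :
    arclength α (γ 0) (γ t) = t * (Real.exp (α (γ 0)) * deriv γ 0) :=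
  calc arclength α (γ 0) (γ t) = ∫ s in (0 : ℝ)..t, Real.exp (α (γ s)) * deriv γ s :=
        (intervalIntegral.integral_comp_mul_deriv'' hγ.contDiff.continuous.continuousOn
          (fun s _ => (hγ.hasDerivAt s).hasDerivWithinAt) hγ.contDiff_deriv.continuous.continuousOn
          (hα.continuousOn.rexp.mono (image_subset_iff.2 fun s _ => hγ.mem s))).symm
    _ = ∫ _ in (0 : ℝ)..t, Real.exp (α (γ 0)) * deriv γ 0 := by
        simp only [hγ.exp_mul_deriv_eq hI hα _ 0]
    _ = t * (Real.exp (α (γ 0)) * deriv γ 0) := by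
        rw [intervalIntegral.integral_const, sub_zero, smul_eq_mul]

theorem arclength_image_eq_univ (hγ : IsCompleteGeodesic α I γ) (hI : IsOpen I)
    (hα : DifferentiableOn ℝ α I) (hv : deriv γ 0 ≠ 0) : arclength α (γ 0) '' I = univ := by
  refine eq_univ_of_forall fun s => ⟨γ (s / (Real.exp (α (γ 0)) * deriv γ 0)), hγ.mem _, ?_⟩
  rw [hγ.arclength_eq hI hα, div_mul_cancel₀ _ (mul_ne_zero (Real.exp_ne_zero _) hv)]

end IsCompleteGeodesic

theorem isCompleteGeodesic_of_hasDerivAt (hI : IsOpen I) (hα : ContDiffOn ℝ 1 α I) {c : ℝ}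
    (hγI : ∀ t, γ t ∈ I) (hγ : ∀ t, HasDerivAt γ (c * Real.exp (-α (γ t))) t) :
    IsCompleteGeodesic α I γ := by
  have hderiv : deriv γ = fun t => c * Real.exp (-α (γ t)) := funext fun t => (hγ t).deriv
  have hdiff : Differentiable ℝ γ := fun t => (hγ t).differentiableAt
  have hγ_one : ContDiff ℝ 1 γ := by
    refine contDiff_one_iff_deriv.2 ⟨hdiff, ?_⟩
    rw [hderiv]
    exact continuous_const.mul (hα.continuousOn.comp_continuous hdiff.continuous hγI).neg.rexp
  refine ⟨?_, hγI, fun t => ?_⟩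
  · rw [← one_add_one_eq_two, contDiff_succ_iff_deriv, hderiv]
    exact ⟨hdiff, by simp, contDiff_const.mul (hα.comp_contDiff hγ_one hγI).neg.exp⟩
  · have hα_t := ((hα.differentiableOn one_ne_zero).differentiableAt
      (hI.mem_nhds (hγI t))).hasDerivAt
    have hderiv_two := ((hα_t.comp t (hγ t)).neg.exp.const_mul c).deriv
    simp only [Pi.neg_apply, Function.comp_apply] at hderiv_two
    rw [hderiv, hderiv_two]
    ring

theorem exists_isCompleteGeodesic_of_arclength_image_eq_univ [I.OrdConnected] {q : ℝ}
    (hI : IsOpen I) (hα : ContDiffOn ℝ 1 α I) (hq : q ∈ I) (hsurj : arclength α q '' I = univ)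
    (v : ℝ) : ∃ γ : ℝ → ℝ, IsCompleteGeodesic α I γ ∧ γ 0 = q ∧ deriv γ 0 = v := by
  obtain ⟨G, hG₀, hG⟩ := exists_inverse_arclength hI hα.continuousOn hq hsurj
  set c := Real.exp (α q) * v
  have hγ (t : ℝ) : HasDerivAt (fun t => G (c * t)) (c * Real.exp (-α (G (c * t)))) t :=
    ((hG (c * t)).2.comp t (hasDerivAt_const_mul c)).congr_deriv (mul_comm _ _)
  refine ⟨fun t => G (c * t), isCompleteGeodesic_of_hasDerivAt hI hα (fun t => (hG _).1) hγ, ?_, ?_⟩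
  · simp only [mul_zero, hG₀]
  · rw [(hγ 0).deriv, mul_zero, hG₀, mul_right_comm, ← Real.exp_add, add_neg_cancel, Real.exp_zero,
      one_mul]

end Geodesic

/-- Let `a, b ∈ ℝ ∪ {−∞, +∞}` with `a < b`, `I = (a,b)`, `α : I → ℝ` continuously
differentiable, `q ∈ I`.  There exists a twice continuously differentiable `γ : ℝ → I`
with `γ'' + α'(γ)(γ')² = 0` on all of `ℝ`, `γ 0 = q`, `γ' 0 = 1`, if and only if
`r ↦ e^{α r}` is not Lebesgue-integrable on `(a,q)` and not on `(q,b)`. -/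
theorem stmt_3 (a b : EReal) (hab : a < b) (α : ℝ → ℝ) (q : ℝ)
    (hq : a < (q : EReal) ∧ (q : EReal) < b)
    (hα : ContDiffOn ℝ 1 α {x : ℝ | a < (x : EReal) ∧ (x : EReal) < b}) :
    (∃ γ : ℝ → ℝ, ContDiff ℝ 2 γ ∧
        (∀ t : ℝ, a < (γ t : EReal) ∧ (γ t : EReal) < b) ∧
        (∀ t : ℝ, deriv (deriv γ) t + deriv α (γ t) * (deriv γ t) ^ 2 = 0) ∧
        γ 0 = q ∧ deriv γ 0 = 1) ↔
      (¬ IntegrableOn (fun r => Real.exp (α r)) {x : ℝ | a < (x : EReal) ∧ x < q} ∧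
       ¬ IntegrableOn (fun r => Real.exp (α r)) {x : ℝ | q < x ∧ (x : EReal) < b}) := by
  set I : Set ℝ := {x : ℝ | a < (x : EReal) ∧ (x : EReal) < b}
  have hI : IsOpen I := isOpen_Ioo.preimage continuous_coe_real_ereal
  have : I.OrdConnected := ordConnected_Ioo.preimage_mono EReal.coe_strictMono.monotone
  have left_eq : {x : ℝ | a < (x : EReal) ∧ x < q} = I ∩ Iio q := by
    ext x
    exact ⟨fun h => ⟨⟨h.1, (EReal.coe_lt_coe_iff.2 h.2).trans hq.2⟩, h.2⟩, fun h => ⟨h.1.1, h.2⟩⟩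
  have right_eq : {x : ℝ | q < x ∧ (x : EReal) < b} = I ∩ Ioi q := by
    ext x
    exact ⟨fun h => ⟨⟨hq.1.trans (EReal.coe_lt_coe_iff.2 h.1), h.2⟩, h.1⟩, fun h => ⟨h.2, h.1.2⟩⟩
  rw [left_eq, right_eq, ← arclength_image_eq_univ_iff hI hα.continuousOn hq]
  constructor
  · rintro ⟨γ, hγ, hγI, hode, rfl, hv⟩
    exact IsCompleteGeodesic.arclength_image_eq_univ ⟨hγ, hγI, hode⟩ hI
      (hα.differentiableOn one_ne_zero) (hv ▸ one_ne_zero)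
  · intro hsurj
    obtain ⟨γ, hγ, hγ₀, hv⟩ :=
      exists_isCompleteGeodesic_of_arclength_image_eq_univ hI hα hq hsurj 1
    exact ⟨γ, hγ.contDiff, hγ.mem, hγ.equation, hγ₀, hv⟩
end

section
/- Set r_± = M ± √(M² − Q²). Then: (i) for every r > 0, 1 − 2M/r + Q²/r² = (r − r_+)(r − r_−)/r²; (ii) f(r) = 1 − 2M/r + Q²/r² is strictly positive for all r > r_+; (iii) for every R > r_+, the function r ↦ f(r)^{−1} is not Lebesgue-integrable on (r_+, R) and is not Lebesgue-integrable on (R, ∞). -/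
open MeasureTheory Set

/-!
Factoring out the two roots shows that `f` is positive beyond `r₊`. At `r₊ ≠ 0` the function `f`
is differentiable and vanishes, so `f r = O(r - r₊)` and `f⁻¹` dominates `(r - r₊)⁻¹`, which is not
integrable. At infinity `f⁻¹` tends to `1`, and an integrable function on a set of infinite measure
cannot have a nonzero limit. Since the comparison near `r₊` is only an upper bound on `f`, it is
indifferent to whether `r₊` is a simple root or, in the extremal case `Q² = M²`, a double one.
-/

open Filter Topology Asymptotics

theorem not_integrableAtFilter_sub_inv_nhdsGT (c : ℝ) :
    ¬ IntegrableAtFilter (fun x : ℝ ↦ (x - c)⁻¹) (𝓝[>] c) := by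
  rintro ⟨s, hs, hint⟩
  obtain ⟨d, hcd, hsub⟩ := mem_nhdsGT_iff_exists_Ioo_subset.1 hs
  have hinterval : IntervalIntegrable (fun x : ℝ ↦ (x - c)⁻¹) volume c d :=
    (intervalIntegrable_iff_integrableOn_Ioo_of_le (le_of_lt hcd)).2 (hint.mono_set hsub)
  exact (intervalIntegrable_sub_inv_iff.1 hinterval).elim (ne_of_lt hcd) (· left_mem_uIcc)

theorem not_integrableAtFilter_inv_nhdsGT_of_eq_zero {𝕜 : Type*} [NormedDivisionRing 𝕜]
    [NormedSpace ℝ 𝕜] {g : ℝ → 𝕜} {c : ℝ} (hg : DifferentiableWithinAt ℝ g (Ioi c) c)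
    (hc : g c = 0) (hne : ∀ᶠ x in 𝓝[>] c, g x ≠ 0) :
    ¬ IntegrableAtFilter (fun x ↦ (g x)⁻¹) (𝓝[>] c) := by
  have hO : g =O[𝓝[>] c] fun x ↦ x - c := by simpa only [hc, sub_zero] using hg.isBigO_sub
  have hO_inv : (fun x ↦ (x - c)⁻¹) =O[𝓝[>] c] fun x ↦ (g x)⁻¹ :=
    hO.inv_rev (hne.mono fun _ hx h0 ↦ (hx h0).elim)
  have hmeas : Measurable fun x : ℝ ↦ (x - c)⁻¹ := by fun_prop
  exact fun hint ↦ not_integrableAtFilter_sub_inv_nhdsGT c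
    (hO_inv.integrableAtFilter hmeas.stronglyMeasurable.stronglyMeasurableAtFilter hint)

theorem not_integrableAtFilter_atTop_of_tendsto {E : Type*} [NormedAddCommGroup E] {g : ℝ → E}
    {a : E} (hg : Tendsto g atTop (𝓝 a)) (ha : a ≠ 0) : ¬ IntegrableAtFilter g atTop := by
  have hvolume : ∀ s ∈ (atTop : Filter ℝ), volume s = ⊤ := fun s hs ↦ by
    obtain ⟨b, hb⟩ := mem_atTop_sets.1 hs
    exact measure_mono_top (fun x hx ↦ hb x hx) (Real.volume_Ici (a := b))
  exact fun hint ↦ ha (hint.eq_zero_of_tendsto hvolume hg)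

namespace ReissnerNordstrom

/-- The lapse-squared `f(r) = 1 - 2M/r + Q²/r²` of the Reissner–Nordström metric of mass `M` and
charge `Q`; division by zero gives it the junk value `1` at `r = 0`. -/
noncomputable def lapseSq (M Q r : ℝ) : ℝ := 1 - 2 * M / r + Q ^ 2 / r ^ 2

/-- The radius `r₊` of the outer (event) horizon, meaningful for `Q² ≤ M²`. -/
noncomputable def outerRadius (M Q : ℝ) : ℝ := M + √(M ^ 2 - Q ^ 2)

/-- The radius `r₋` of the inner (Cauchy) horizon, meaningful for `Q² ≤ M²`. -/
noncomputable def innerRadius (M Q : ℝ) : ℝ := M - √(M ^ 2 - Q ^ 2)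

variable {M Q r : ℝ}

theorem innerRadius_le_outerRadius : innerRadius M Q ≤ outerRadius M Q := by
  have := Real.sqrt_nonneg (M ^ 2 - Q ^ 2)
  unfold innerRadius outerRadius
  linarith

theorem outerRadius_pos (hM : 0 < M) : 0 < outerRadius M Q :=
  add_pos_of_pos_of_nonneg hM (Real.sqrt_nonneg _)

theorem lapseSq_eq_mul_div (hQ : Q ^ 2 ≤ M ^ 2) (hr : r ≠ 0) :
    lapseSq M Q r = (r - outerRadius M Q) * (r - innerRadius M Q) / r ^ 2 := by
  have hsq : √(M ^ 2 - Q ^ 2) ^ 2 = M ^ 2 - Q ^ 2 := Real.sq_sqrt (sub_nonneg.2 hQ)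
  unfold lapseSq outerRadius innerRadius
  field_simp
  linear_combination hsq

theorem lapseSq_pos (hQ : Q ^ 2 ≤ M ^ 2) (hr : r ≠ 0) (hr_outer : outerRadius M Q < r) :
    0 < lapseSq M Q r := by
  have hr_inner : innerRadius M Q < r := innerRadius_le_outerRadius.trans_lt hr_outer
  rw [lapseSq_eq_mul_div hQ hr]
  exact div_pos (mul_pos (sub_pos.2 hr_outer) (sub_pos.2 hr_inner)) (by positivity)

theorem lapseSq_outerRadius (hQ : Q ^ 2 ≤ M ^ 2) (h : outerRadius M Q ≠ 0) :
    lapseSq M Q (outerRadius M Q) = 0 := by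
  rw [lapseSq_eq_mul_div hQ h, sub_self, zero_mul, zero_div]

theorem differentiableAt_lapseSq (hr : r ≠ 0) : DifferentiableAt ℝ (lapseSq M Q) r := by
  unfold lapseSq
  fun_prop (disch := positivity)

theorem tendsto_lapseSq_atTop (M Q : ℝ) : Tendsto (lapseSq M Q) atTop (𝓝 1) := by
  have hM : Tendsto (fun r : ℝ ↦ 2 * M / r) atTop (𝓝 0) := tendsto_const_nhds.div_atTop tendsto_id
  have hQ : Tendsto (fun r : ℝ ↦ Q ^ 2 / r ^ 2) atTop (𝓝 0) :=
    tendsto_const_nhds.div_atTop (tendsto_pow_atTop two_ne_zero)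
  have hlapse : Tendsto (lapseSq M Q) atTop (𝓝 (1 - 0 + 0)) := (hM.const_sub 1).add hQ
  rwa [sub_zero, add_zero] at hlapse

theorem not_integrableAtFilter_inv_lapseSq_outerRadius (hM : 0 < M) (hQ : Q ^ 2 ≤ M ^ 2) :
    ¬ IntegrableAtFilter (fun r ↦ (lapseSq M Q r)⁻¹) (𝓝[>] outerRadius M Q) := by
  have hpos : 0 < outerRadius M Q := outerRadius_pos hM
  have hne : ∀ᶠ r in 𝓝[>] outerRadius M Q, lapseSq M Q r ≠ 0 := by
    filter_upwards [self_mem_nhdsWithin] with r hr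
    exact (lapseSq_pos hQ (hpos.trans hr).ne' hr).ne'
  exact not_integrableAtFilter_inv_nhdsGT_of_eq_zero
    (differentiableAt_lapseSq hpos.ne').differentiableWithinAt
    (lapseSq_outerRadius hQ hpos.ne') hne

theorem not_integrableAtFilter_inv_lapseSq_atTop (M Q : ℝ) :
    ¬ IntegrableAtFilter (fun r ↦ (lapseSq M Q r)⁻¹) atTop :=
  not_integrableAtFilter_atTop_of_tendsto ((tendsto_lapseSq_atTop M Q).inv₀ one_ne_zero)
    (inv_ne_zero one_ne_zero)

end ReissnerNordstrom

open ReissnerNordstrom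

theorem stmt_6_general (M Q : ℝ) (hM : 0 < M) (hQ : Q ^ 2 ≤ M ^ 2) :
    (∀ r : ℝ, 0 < r →
      lapseSq M Q r = (r - outerRadius M Q) * (r - innerRadius M Q) / r ^ 2) ∧
    (∀ r : ℝ, outerRadius M Q < r → 0 < lapseSq M Q r) ∧
    (∀ R : ℝ, outerRadius M Q < R →
      ¬ IntegrableOn (fun r ↦ (lapseSq M Q r)⁻¹) (Ioo (outerRadius M Q) R) ∧
      ¬ IntegrableOn (fun r ↦ (lapseSq M Q r)⁻¹) (Ioi R)) := by
  refine ⟨fun r hr ↦ lapseSq_eq_mul_div hQ hr.ne',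
    fun r hr ↦ lapseSq_pos hQ ((outerRadius_pos hM).trans hr).ne' hr,
    fun R hR ↦ ⟨fun hint ↦ ?_, fun hint ↦ ?_⟩⟩
  · exact not_integrableAtFilter_inv_lapseSq_outerRadius hM hQ ⟨_, Ioo_mem_nhdsGT hR, hint⟩
  · exact not_integrableAtFilter_inv_lapseSq_atTop M Q ⟨_, Ioi_mem_atTop R, hint⟩

/-- Reissner–Nordström: for `M > 0`, `Q² < M²`, and `r_± = M ± √(M² − Q²)`:
(i) `1 − 2M/r + Q²/r² = (r − r₊)(r − r₋)/r²` for `r > 0`;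
(ii) `f(r) = 1 − 2M/r + Q²/r² > 0` for `r > r₊`;
(iii) for every `R > r₊`, `f⁻¹` is not Lebesgue-integrable on `(r₊, R)` nor on `(R, ∞)`. -/
theorem stmt_6 (M Q : ℝ) (hM : 0 < M) (hQ : Q ^ 2 < M ^ 2) :
    (∀ r : ℝ, 0 < r →
      1 - 2 * M / r + Q ^ 2 / r ^ 2 =
        (r - (M + Real.sqrt (M ^ 2 - Q ^ 2))) * (r - (M - Real.sqrt (M ^ 2 - Q ^ 2))) / r ^ 2) ∧
    (∀ r : ℝ, M + Real.sqrt (M ^ 2 - Q ^ 2) < r → 0 < 1 - 2 * M / r + Q ^ 2 / r ^ 2) ∧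
    (∀ R : ℝ, M + Real.sqrt (M ^ 2 - Q ^ 2) < R →
      ¬ IntegrableOn (fun r : ℝ => (1 - 2 * M / r + Q ^ 2 / r ^ 2)⁻¹)
          (Set.Ioo (M + Real.sqrt (M ^ 2 - Q ^ 2)) R) ∧
      ¬ IntegrableOn (fun r : ℝ => (1 - 2 * M / r + Q ^ 2 / r ^ 2)⁻¹) (Set.Ioi R)) :=
  stmt_6_general M Q hM hQ.le
end

section
/- Set A = arccos(3√3·M/L), r_0 = (2L/√3)·cos(−π/3 + A/3) and r_1 = (2L/√3)·cos(π/3 + A/3), so that 0 < r_1 < r_0. Then: (i) V(r) = 1 − 2M/r − r²/L² is strictly positive for all r with r_1 < r < r_0; (ii) for every R with r_1 < R < r_0, the function r ↦ V(r)^{−1} is not Lebesgue-integrable on (r_1, R) and is not Lebesgue-integrable on (R, r_0). -/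
open MeasureTheory Set

/-! Up to the factor `-1 / (L ^ 2 * r)`, the function `V` is the depressed cubic
`r ^ 3 - L ^ 2 * r + 2 * M * L ^ 2`. Viète's substitution `r = 2 * L / √3 * cos φ` turns its roots
into the solutions of `cos (3 * φ) = -3 * √3 * M / L = -cos A`, among them `φ = A / 3 ± π / 3`. The
cubic has no square term, so its third root is `-(r₀ + r₁) < 0`, which fixes the sign of `V`
between the two horizons. Finally `V` is differentiable at its zeros, so `V r = O(r - c)` at a
horizon `c`, and `1 / V` dominates the non-integrable `1 / (r - c)`. -/

open Filter Topology

lemma depressed_cubic_eq_mul {R : Type*} [CommRing R] [NoZeroDivisors R] {p q a b : R} (hab : a ≠ b)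
    (ha : a ^ 3 + p * a + q = 0) (hb : b ^ 3 + p * b + q = 0) (x : R) :
    x ^ 3 + p * x + q = (x - a) * (x - b) * (x + a + b) := by
  have hp : a ^ 2 + a * b + b ^ 2 + p = 0 := by
    refine (mul_eq_zero.mp ?_).resolve_left (sub_ne_zero.mpr hab)
    linear_combination ha - hb
  linear_combination (x - a) * hp + ha

lemma cube_sub_sq_mul_two_mul_div_sqrt_three_mul_cos (L φ : ℝ) :
    (2 * L / √3 * Real.cos φ) ^ 3 - L ^ 2 * (2 * L / √3 * Real.cos φ) =
      2 * L ^ 3 / (3 * √3) * Real.cos (3 * φ) := by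
  have h_sqrt : √3 ^ 2 = 3 := Real.sq_sqrt (by norm_num)
  rw [Real.cos_three_mul]
  field_simp
  rw [h_sqrt]
  ring

lemma cos_pi_div_three_add_lt {θ : ℝ} (hθ : 0 < θ) (hθπ : θ < Real.pi) :
    Real.cos (Real.pi / 3 + θ) < Real.cos (-(Real.pi / 3) + θ) := by
  have h_sin : 0 < √3 * Real.sin θ :=
    mul_pos (by positivity) (Real.sin_pos_of_pos_of_lt_pi hθ hθπ)
  simp only [Real.cos_add, Real.cos_neg, Real.sin_neg, Real.cos_pi_div_three,
    Real.sin_pi_div_three]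
  linarith

lemma abs_three_mul_sqrt_three_mul_div_lt_one {M L : ℝ} (h : 27 * M ^ 2 < L ^ 2) :
    |3 * √3 * M / L| < 1 := by
  have hL : 0 < L ^ 2 := lt_of_le_of_lt (by positivity) h
  have h_sqrt : √3 ^ 2 = 3 := Real.sq_sqrt (by norm_num)
  rw [← sq_lt_one_iff_abs_lt_one, div_pow, div_lt_one hL]
  calc (3 * √3 * M) ^ 2 = 27 * M ^ 2 := by linear_combination 9 * M ^ 2 * h_sqrt
    _ < L ^ 2 := h

lemma not_intervalIntegrable_inv_of_differentiableAt {𝕜 : Type*} [NormedDivisionRing 𝕜]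
    [NormedSpace ℝ 𝕜] {f : ℝ → 𝕜} {a b c : ℝ} (hf : DifferentiableAt ℝ f c) (hfc : f c = 0)
    (hne : ∀ᶠ x in 𝓝[≠] c, f x ≠ 0) (hab : a ≠ b) (hc : c ∈ uIcc a b) :
    ¬ IntervalIntegrable (fun x => (f x)⁻¹) volume a b := by
  have hO : f =O[𝓝[≠] c] fun x => x - c := by
    simpa only [hfc, sub_zero] using hf.isBigO_sub.mono nhdsWithin_le_nhds
  have hO_inv : (fun x => (x - c)⁻¹) =O[𝓝[≠] c] fun x => (f x)⁻¹ :=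
    hO.inv_rev (hne.mono fun _ hx h0 => absurd h0 hx)
  exact not_intervalIntegrable_of_sub_inv_isBigO_punctured hO_inv hab hc

/-- The square `V(r)` of the lapse function of the Schwarzschild–de Sitter spacetime with mass `M`
and de Sitter radius `L`. Its value at `r = 0` is the junk value `1`. -/
noncomputable def lapseSq (M L r : ℝ) : ℝ := 1 - 2 * M / r - r ^ 2 / L ^ 2

section lapseSq

variable {M L r : ℝ}

lemma lapseSq_eq_neg_cubic_div (hL : L ≠ 0) (hr : r ≠ 0) :
    lapseSq M L r = -(r ^ 3 + -L ^ 2 * r + 2 * M * L ^ 2) / (L ^ 2 * r) := by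
  unfold lapseSq
  field_simp
  ring

lemma lapseSq_eq_zero_iff (hL : L ≠ 0) (hr : r ≠ 0) :
    lapseSq M L r = 0 ↔ r ^ 3 + -L ^ 2 * r + 2 * M * L ^ 2 = 0 := by
  rw [lapseSq_eq_neg_cubic_div hL hr, div_eq_zero_iff, neg_eq_zero,
    or_iff_left (by positivity)]

lemma lapseSq_eq_zero_of_cos_three_mul {φ : ℝ} (hL : L ≠ 0) (hr : 2 * L / √3 * Real.cos φ ≠ 0)
    (hφ : Real.cos (3 * φ) = -(3 * √3 * M / L)) :
    lapseSq M L (2 * L / √3 * Real.cos φ) = 0 := by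
  have h_cubic := cube_sub_sq_mul_two_mul_div_sqrt_three_mul_cos L φ
  have h_const : 2 * L ^ 3 / (3 * √3) * -(3 * √3 * M / L) = -(2 * M * L ^ 2) := by field_simp
  rw [hφ, h_const] at h_cubic
  rw [lapseSq_eq_zero_iff hL hr]
  linear_combination h_cubic

lemma lapseSq_pos_of_mem_Ioo {a b : ℝ} (hL : L ≠ 0) (ha : 0 < a) (hVa : lapseSq M L a = 0)
    (hVb : lapseSq M L b = 0) (hr : r ∈ Ioo a b) : 0 < lapseSq M L r := by
  obtain ⟨har, hrb⟩ := hr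
  have hr_pos : 0 < r := ha.trans har
  have hb : 0 < b := hr_pos.trans hrb
  rw [lapseSq_eq_zero_iff hL ha.ne'] at hVa
  rw [lapseSq_eq_zero_iff hL hb.ne'] at hVb
  rw [lapseSq_eq_neg_cubic_div hL hr_pos.ne',
    depressed_cubic_eq_mul (har.trans hrb).ne hVa hVb]
  refine div_pos (neg_pos.mpr ?_) (by positivity)
  exact mul_neg_of_neg_of_pos
    (mul_neg_of_pos_of_neg (sub_pos.mpr har) (sub_neg.mpr hrb)) (by positivity)

open Polynomial in
lemma finite_setOf_lapseSq_eq_zero (M : ℝ) (hL : L ≠ 0) : {r | lapseSq M L r = 0}.Finite := by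
  have h_ne : (X ^ 3 + C (-L ^ 2) * X + C (2 * M * L ^ 2) : ℝ[X]) ≠ 0 :=
    Monic.ne_zero (by monicity!)
  refine ((finite_setOfPred_isRoot h_ne).insert 0).subset fun r hr => ?_
  refine or_iff_not_imp_left.mpr fun hr0 => ?_
  simpa [IsRoot] using (lapseSq_eq_zero_iff hL hr0).mp hr

lemma differentiableAt_lapseSq (hr : r ≠ 0) : DifferentiableAt ℝ (lapseSq M L) r := by
  unfold lapseSq
  fun_prop (disch := assumption)

lemma not_integrableOn_Ioo_inv_lapseSq {a b c : ℝ} (hL : L ≠ 0) (hc0 : c ≠ 0)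
    (hVc : lapseSq M L c = 0) (hab : a < b) (hc : c ∈ Icc a b) :
    ¬ IntegrableOn (fun r => (lapseSq M L r)⁻¹) (Ioo a b) := by
  have hne : ∀ᶠ r in 𝓝[≠] c, lapseSq M L r ≠ 0 :=
    nhdsNE_le_cofinite c (finite_setOf_lapseSq_eq_zero M hL).compl_mem_cofinite
  rw [← intervalIntegrable_iff_integrableOn_Ioo_of_le hab.le]
  exact not_intervalIntegrable_inv_of_differentiableAt (differentiableAt_lapseSq hc0) hVc hne
    hab.ne (Icc_subset_uIcc hc)

end lapseSq

/-- Schwarzschild–de Sitter, `L, M > 0`, `27M² < L²`, `A = arccos(3√3 M/L)`,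
`r₀ = (2L/√3) cos(−π/3 + A/3)`, `r₁ = (2L/√3) cos(π/3 + A/3)`, so `0 < r₁ < r₀`.
Then `V(r) = 1 − 2M/r − r²/L² > 0` on `(r₁, r₀)`, and for every `R ∈ (r₁, r₀)` the
function `V⁻¹` is not Lebesgue-integrable on `(r₁, R)` nor on `(R, r₀)`. -/
theorem stmt_9 (M L : ℝ) (hM : 0 < M) (hL : 0 < L) (h : 27 * M ^ 2 < L ^ 2) :
    let A : ℝ := Real.arccos (3 * Real.sqrt 3 * M / L)
    let r₀ : ℝ := 2 * L / Real.sqrt 3 * Real.cos (-(Real.pi / 3) + A / 3)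
    let r₁ : ℝ := 2 * L / Real.sqrt 3 * Real.cos (Real.pi / 3 + A / 3)
    0 < r₁ ∧ r₁ < r₀ ∧
    (∀ r : ℝ, r₁ < r → r < r₀ → 0 < 1 - 2 * M / r - r ^ 2 / L ^ 2) ∧
    (∀ R : ℝ, r₁ < R → R < r₀ →
      ¬ IntegrableOn (fun r : ℝ => (1 - 2 * M / r - r ^ 2 / L ^ 2)⁻¹) (Set.Ioo r₁ R) ∧
      ¬ IntegrableOn (fun r : ℝ => (1 - 2 * M / r - r ^ 2 / L ^ 2)⁻¹) (Set.Ioo R r₀)) := by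
  intro A r₀ r₁
  have hx : |3 * √3 * M / L| < 1 := abs_three_mul_sqrt_three_mul_div_lt_one h
  have hA_cos : Real.cos A = 3 * √3 * M / L :=
    Real.cos_arccos (abs_lt.mp hx).1.le (abs_lt.mp hx).2.le
  have hA_pos : 0 < A := Real.arccos_pos.mpr (abs_lt.mp hx).2
  have hA_lt : A < Real.pi / 2 := Real.arccos_lt_pi_div_two.mpr (by positivity)
  have hr₁ : 0 < r₁ :=
    mul_pos (by positivity) (Real.cos_pos_of_mem_Ioo ⟨by linarith, by linarith⟩)
  have hlt : r₁ < r₀ :=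
    mul_lt_mul_of_pos_left (cos_pi_div_three_add_lt (by linarith) (by linarith)) (by positivity)
  have hr₀ : 0 < r₀ := hr₁.trans hlt
  have hV₁ : lapseSq M L r₁ = 0 := lapseSq_eq_zero_of_cos_three_mul hL.ne' hr₁.ne' <| by
    rw [← hA_cos, ← Real.cos_add_pi]
    ring_nf
  have hV₀ : lapseSq M L r₀ = 0 := lapseSq_eq_zero_of_cos_three_mul hL.ne' hr₀.ne' <| by
    rw [← hA_cos, ← Real.cos_sub_pi]
    ring_nf
  exact ⟨hr₁, hlt, fun r h₁ h₀ => lapseSq_pos_of_mem_Ioo hL.ne' hr₁ hV₁ hV₀ ⟨h₁, h₀⟩,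
    fun R h₁ h₀ =>
      ⟨not_integrableOn_Ioo_inv_lapseSq hL.ne' hr₁.ne' hV₁ h₁ (left_mem_Icc.mpr h₁.le),
        not_integrableOn_Ioo_inv_lapseSq hL.ne' hr₀.ne' hV₀ h₀ (right_mem_Icc.mpr h₀.le)⟩⟩
end
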